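/- arXiv:1711.09182 — 4 statements merged into one kernel-verified Lean document; each statement's English description precedes it below -/
import Mathlib

section
/- Let n ≥ 1, T > 0, and θ₁,…,θₙ ∈ (−π/2, π/2]. Let V₀ = {(x,0) : x ∈ ℂⁿ} ⊆ ℂ^{2n} and V₁ = {(C(θ)y, S(θ)y) : y ∈ ℂⁿ} ⊆ ℂ^{2n}. Then for λ ∈ ℂ, there exists a nonzero continuously differentiable function z : [0,T] → ℂ^{2n} satisfying −J ż(t) = λ z(t) for all t ∈ [0,T], z(0) ∈ V₀ and z(T) ∈ V₁, if and only if λ = (θ_j + kπ)/T for some j ∈ {1,…,n} and some k ∈ ℤ. -/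
/-!
Writing `z = (p, q)`, the equation `-J ż = λ z` decouples into the planar systems
`pᵢ' = -λ qᵢ`, `qᵢ' = λ pᵢ`, one for each coordinate `i`. Rotating by the angle `-λ t` turns such a
pair into a constant one, so `qᵢ(0) = 0` forces `pᵢ = cᵢ cos (λ t)` and `qᵢ = cᵢ sin (λ t)`
(`rotation_solution`). The condition at `T` says that `cᵢ (cos λT, sin λT)` is proportional to
`(cos θᵢ, sin θᵢ)`, that is `cᵢ sin (λT - θᵢ) = 0`. As `z ≠ 0`, some `cᵢ` is nonzero, and the zeros
of the complex sine are exactly the integer multiples of `π`. Conversely, when `λT = θⱼ + kπ`, the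
rotating solution in the `j`-th plane satisfies both boundary conditions.
-/

open scoped Real
open Matrix

/-- The complex standard symplectic matrix `J = [[0, -Iₙ],[Iₙ, 0]]`. -/
noncomputable def Jmat (n : ℕ) : Matrix (Fin n ⊕ Fin n) (Fin n ⊕ Fin n) ℂ :=
  Matrix.fromBlocks 0 (-1) 1 0

lemma hasDerivAt_cos_mul (lam : ℂ) (t : ℝ) :
    HasDerivAt (fun s : ℝ => Complex.cos (lam * s)) (-(lam * Complex.sin (lam * t))) t := by
  have h1 : HasDerivAt (fun s : ℂ => lam * s) lam t := by
    simpa using (hasDerivAt_id (t : ℂ)).const_mul lam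
  exact h1.ccos.comp_ofReal.congr_deriv (by ring)

lemma hasDerivAt_sin_mul (lam : ℂ) (t : ℝ) :
    HasDerivAt (fun s : ℝ => Complex.sin (lam * s)) (lam * Complex.cos (lam * t)) t := by
  have h1 : HasDerivAt (fun s : ℂ => lam * s) lam t := by
    simpa using (hasDerivAt_id (t : ℂ)).const_mul lam
  exact h1.csin.comp_ofReal.congr_deriv (by ring)

/-- The planar system `p' = -λ q`, `q' = λ p` on `[0, T]` with `q 0 = 0` has only the rotating
solutions: `cos (λ t) p + sin (λ t) q` and `cos (λ t) q - sin (λ t) p` have zero derivative. -/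
lemma rotation_solution {T : ℝ} {lam : ℂ} {p q : ℝ → ℂ}
    (hp : ∀ t ∈ Set.Icc (0 : ℝ) T, HasDerivAt p (-(lam * q t)) t)
    (hq : ∀ t ∈ Set.Icc (0 : ℝ) T, HasDerivAt q (lam * p t) t) (h0 : q 0 = 0) :
    ∀ t ∈ Set.Icc (0 : ℝ) T,
      p t = Complex.cos (lam * t) * p 0 ∧ q t = Complex.sin (lam * t) * p 0 := by
  have hu : ∀ t ∈ Set.Icc (0 : ℝ) T, HasDerivAt
      (fun s : ℝ => Complex.cos (lam * s) * p s + Complex.sin (lam * s) * q s) 0 t := by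
    intro t ht
    refine (((hasDerivAt_cos_mul lam t).mul (hp t ht)).add
      ((hasDerivAt_sin_mul lam t).mul (hq t ht))).congr_deriv ?_
    ring
  have hv : ∀ t ∈ Set.Icc (0 : ℝ) T, HasDerivAt
      (fun s : ℝ => Complex.cos (lam * s) * q s - Complex.sin (lam * s) * p s) 0 t := by
    intro t ht
    refine (((hasDerivAt_cos_mul lam t).mul (hq t ht)).sub
      ((hasDerivAt_sin_mul lam t).mul (hp t ht))).congr_deriv ?_
    ring
  intro t ht
  have hut := constant_of_has_deriv_right_zero
    (fun s hs => (hu s hs).continuousAt.continuousWithinAt)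
    (fun s hs => (hu s (Set.Ico_subset_Icc_self hs)).hasDerivWithinAt) t ht
  have hvt := constant_of_has_deriv_right_zero
    (fun s hs => (hv s hs).continuousAt.continuousWithinAt)
    (fun s hs => (hv s (Set.Ico_subset_Icc_self hs)).hasDerivWithinAt) t ht
  simp [h0] at hut hvt
  have hcs := Complex.sin_sq_add_cos_sq (lam * t)
  constructor
  · linear_combination Complex.cos (lam * t) * hut - Complex.sin (lam * t) * hvt - p t * hcs
  · linear_combination Complex.sin (lam * t) * hut + Complex.cos (lam * t) * hvt - q t * hcs

/-- the point spectrum of `A = -J d/dt` with Lagrangian boundary conditions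
`z(0) ∈ V₀ = ℂⁿ × {0}` and `z(T) ∈ V₁ = {(C(θ)y, S(θ)y)}` is exactly
`{(θⱼ + kπ)/T : 1 ≤ j ≤ n, k ∈ ℤ}`. -/
theorem stmt0 (n : ℕ) (hn : 1 ≤ n) (T : ℝ) (hT : 0 < T) (θ : Fin n → ℝ)
    (hθ : ∀ j, θ j ∈ Set.Ioc (-(π / 2)) (π / 2)) (lam : ℂ) :
    (∃ z z' : ℝ → (Fin n ⊕ Fin n → ℂ),
      (∀ t ∈ Set.Icc (0 : ℝ) T, HasDerivAt z (z' t) t) ∧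
      ContinuousOn z' (Set.Icc (0 : ℝ) T) ∧
      (∀ t ∈ Set.Icc (0 : ℝ) T, -((Jmat n).mulVec (z' t)) = lam • z t) ∧
      (∃ t ∈ Set.Icc (0 : ℝ) T, z t ≠ 0) ∧
      (∀ i : Fin n, z 0 (Sum.inr i) = 0) ∧
      (∃ y : Fin n → ℂ, z T = Sum.elim (fun i => Real.cos (θ i) * y i)
        (fun i => Real.sin (θ i) * y i)))
    ↔ ∃ (j : Fin n) (k : ℤ), lam = (((θ j : ℂ) + (k : ℂ) * (π : ℂ)) / (T : ℂ)) := by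
  have hT0 : (T : ℂ) ≠ 0 := by exact_mod_cast hT.ne'
  constructor
  · rintro ⟨z, z', hz, -, hode, ⟨t₀, ht₀, hne⟩, h0, y, hy⟩
    have hzi : ∀ a, ∀ t ∈ Set.Icc (0 : ℝ) T, HasDerivAt (fun s => z s a) (z' t a) t :=
      fun a t ht => hasDerivAt_pi.1 (hz t ht) a
    have hsol : ∀ i : Fin n, ∀ t ∈ Set.Icc (0 : ℝ) T,
        z t (Sum.inl i) = Complex.cos (lam * t) * z 0 (Sum.inl i) ∧
        z t (Sum.inr i) = Complex.sin (lam * t) * z 0 (Sum.inl i) := by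
      intro i
      refine rotation_solution (p := fun t => z t (Sum.inl i)) (q := fun t => z t (Sum.inr i))
        ?_ ?_ (h0 i)
      · intro t ht
        convert hzi (Sum.inl i) t ht using 1
        have := congrFun (hode t ht) (Sum.inr i)
        simp [Jmat, Matrix.fromBlocks_mulVec] at this
        rw [← this, neg_neg]
      · intro t ht
        convert hzi (Sum.inr i) t ht using 1
        have := congrFun (hode t ht) (Sum.inl i)
        simp [Jmat, Matrix.fromBlocks_mulVec, Matrix.neg_mulVec] at this
        exact this.symm
    obtain ⟨i, hi⟩ : ∃ i, z 0 (Sum.inl i) ≠ 0 := by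
      by_contra! hall
      apply hne
      ext (i | i)
      · simp [(hsol i t₀ ht₀).1, hall i]
      · simp [(hsol i t₀ ht₀).2, hall i]
    obtain ⟨h1, h2⟩ := hsol i T ⟨hT.le, le_rfl⟩
    simp [hy] at h1 h2
    have hsin : Complex.sin (lam * T - θ i) = 0 := by
      apply (mul_eq_zero.1 _).resolve_right hi
      rw [Complex.sin_sub]
      linear_combination Complex.sin (θ i) * h1 - Complex.cos (θ i) * h2
    obtain ⟨k, hk⟩ := Complex.sin_eq_zero_iff.1 hsin
    refine ⟨i, k, ?_⟩
    rw [eq_div_iff hT0]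
    linear_combination hk
  · rintro ⟨j, k, hlam⟩
    have hlT : lam * T = θ j + k * π := by rw [hlam, div_mul_cancel₀ _ hT0]
    refine ⟨fun t => Sum.elim (Pi.single j (Complex.cos (lam * t)))
        (Pi.single j (Complex.sin (lam * t))),
      fun t => Sum.elim (Pi.single j (-(lam * Complex.sin (lam * t))))
        (Pi.single j (lam * Complex.cos (lam * t))), ?_, ?_, ?_, ?_, ?_, ?_⟩
    · intro t _
      rw [hasDerivAt_pi]
      rintro (i | i)
      · rcases eq_or_ne i j with rfl | hij
        · simpa using hasDerivAt_cos_mul lam t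
        · simpa [hij] using hasDerivAt_const t (0 : ℂ)
      · rcases eq_or_ne i j with rfl | hij
        · simpa using hasDerivAt_sin_mul lam t
        · simpa [hij] using hasDerivAt_const t (0 : ℂ)
    · apply Continuous.continuousOn
      rw [continuous_pi_iff]
      rintro (i | i)
      · rcases eq_or_ne i j with rfl | hij
        · simp only [Sum.elim_inl, Pi.single_eq_same]
          fun_prop
        · simpa [hij] using continuous_const
      · rcases eq_or_ne i j with rfl | hij
        · simp only [Sum.elim_inr, Pi.single_eq_same]
          fun_prop
        · simpa [hij] using continuous_const
    · intro t _
      clear hlam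
      ext (i | i) <;> rcases eq_or_ne i j with rfl | hij <;>
        simp [Jmat, Matrix.fromBlocks_mulVec, *]
    · refine ⟨0, ⟨le_rfl, hT.le⟩, fun h => ?_⟩
      simpa using congrFun h (Sum.inl j)
    · intro i
      rcases eq_or_ne i j with rfl | hij <;> simp [*]
    · -- `cos (θ + kπ) = cos θ cos kπ` and `sin (θ + kπ) = sin θ cos kπ`, because `sin kπ = 0`.
      refine ⟨Pi.single j (Complex.cos (k * π)), ?_⟩
      have hk : Complex.sin (k * π) = 0 := Complex.sin_eq_zero_iff.2 ⟨k, rfl⟩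
      ext (i | i)
      · rcases eq_or_ne i j with rfl | hij
        · simp only [Sum.elim_inl, Pi.single_eq_same, hlT, Complex.cos_add, hk]
          push_cast
          ring
        · simp [hij]
      · rcases eq_or_ne i j with rfl | hij
        · simp only [Sum.elim_inr, Pi.single_eq_same, hlT, Complex.sin_add, hk]
          push_cast
          ring
        · simp [hij]
end

section
/- Let n ≥ 1, let N = diag(Iₙ, −Iₙ), and let M be a real symplectic 2n×2n matrix (MᵀJM = J) with block decomposition M = [[a, b],[c, d]] into n×n blocks. Then det( N M⁻¹ N M − I_{2n} ) = (−1)ⁿ · 2^{2n} · det(b) · det(c). -/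
/-!
Since `N² = 1`, one has `N M⁻¹ N M - 1 = N M⁻¹ (N M - M N)`, and the commutator `N M - M N` is the
off-diagonal block matrix `[[0, 2b], [-2c, 0]]`. Multiplying it on the right by `J` gives
`diag(2b, 2c)`. The result follows from `det N = (-1)ⁿ` and `det M = det J = 1`; the latter two hold
because `M` and `J` are symplectic (`SymplecticGroup.det_eq_one`).
-/

open Matrix

/-- The real standard symplectic matrix `J = [[0, -Iₙ],[Iₙ, 0]]`. -/
noncomputable def JR (n : ℕ) : Matrix (Fin n ⊕ Fin n) (Fin n ⊕ Fin n) ℝ :=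
  Matrix.fromBlocks 0 (-1) 1 0

/-- for `N = diag(Iₙ, -Iₙ)` and a symplectic `M = [[a,b],[c,d]]`,
`det(N M⁻¹ N M - I) = (-1)ⁿ 2^{2n} det b det c`. -/
theorem stmt13 (n : ℕ) (hn : 1 ≤ n)
    (N : Matrix (Fin n ⊕ Fin n) (Fin n ⊕ Fin n) ℝ)
    (hN : N = Matrix.fromBlocks 1 0 0 (-1))
    (M : Matrix (Fin n ⊕ Fin n) (Fin n ⊕ Fin n) ℝ)
    (hM : Mᵀ * JR n * M = JR n)
    (a b c d : Matrix (Fin n) (Fin n) ℝ)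
    (hblocks : M = Matrix.fromBlocks a b c d) :
    (N * M⁻¹ * N * M - 1).det = (-1 : ℝ) ^ n * 2 ^ (2 * n) * b.det * c.det := by
  have hJdet : (JR n).det = 1 := SymplecticGroup.det_eq_one (SymplecticGroup.J_mem (Fin n) ℝ)
  have hMdet : M.det = 1 := SymplecticGroup.det_eq_one (SymplecticGroup.mem_iff'.mpr hM)
  have hMinv : M⁻¹ * M = 1 := Matrix.nonsing_inv_mul M (by simp [hMdet])
  have hMinvdet : M⁻¹.det = 1 := by simp [Matrix.det_nonsing_inv, hMdet]
  have hNN : N * N = 1 := by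
    simp [hN, Matrix.fromBlocks_multiply, Matrix.fromBlocks_one]
  have hNdet : N.det = (-1) ^ n := by
    simp [hN, Matrix.det_fromBlocks_zero₂₁, Matrix.det_neg]
  have hfactor : N * M⁻¹ * N * M - 1 = N * M⁻¹ * (N * M - M * N) := by
    have h : N * M⁻¹ * (M * N) = 1 := by
      rw [Matrix.mul_assoc, ← Matrix.mul_assoc M⁻¹, hMinv, Matrix.one_mul, hNN]
    rw [Matrix.mul_sub, h, ← Matrix.mul_assoc]
  have hcomm : (N * M - M * N) * JR n =
      Matrix.fromBlocks ((2 : ℝ) • b) 0 0 ((2 : ℝ) • c) := by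
    rw [hN, hblocks, JR, Matrix.sub_mul]
    simp only [Matrix.fromBlocks_multiply, sub_eq_add_neg, Matrix.fromBlocks_neg,
      Matrix.fromBlocks_add]
    simp [two_smul]
  have hcommdet : (N * M - M * N).det = 2 ^ (2 * n) * b.det * c.det := by
    have h := congrArg Matrix.det hcomm
    rw [Matrix.det_mul, hJdet, mul_one, Matrix.det_fromBlocks_zero₂₁, Matrix.det_smul,
      Matrix.det_smul, Fintype.card_fin] at h
    rw [h]
    ring
  rw [hfactor, Matrix.det_mul, Matrix.det_mul, hNdet, hMinvdet, hcommdet]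
  ring
end

section
/- Let n ≥ 1 and θ₁,…,θₙ ∈ ℝ. For a real n-vector φ put R_φ = [[C(φ), −S(φ)],[S(φ), C(φ)]]. Let S = R_θ and N = diag(Iₙ, −Iₙ). For any real symplectic 2n×2n matrix M, write M·R_{θ/2} = [[â, b̂],[ĉ, d̂]] in n×n blocks. Then det( S N M⁻¹ N M − I_{2n} ) = (−1)ⁿ · 2^{2n} · det(b̂) · det(ĉ). -/
/-!
Put `R = R_{θ/2}` and `P = M R`. The addition formulas give `R R = S`, and conjugation by `N`
inverts rotations: `N R N = R_{-θ/2} = R⁻¹`. Hence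

`S N M⁻¹ N M - 1 = (S N M⁻¹) (N P - P N) R⁻¹`.

Symplectic matrices have determinant `1` (`SymplecticGroup.det_eq_one`), so `S`, `M` and `R⁻¹`
do not contribute to the determinant, and `N` contributes `(-1)ⁿ`. The commutator `N P - P N` is
the block anti-diagonal matrix `[[0, 2b̂], [-2ĉ, 0]]`, of determinant `2^{2n} det b̂ det ĉ`.
-/

open Matrix

/-- The rotation-type symplectic matrix `R_φ = [[C(φ), -S(φ)],[S(φ), C(φ)]]`. -/
noncomputable def Rot {n : ℕ} (φ : Fin n → ℝ) :
    Matrix (Fin n ⊕ Fin n) (Fin n ⊕ Fin n) ℝ :=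
  Matrix.fromBlocks (Matrix.diagonal fun j => Real.cos (φ j))
    (-(Matrix.diagonal fun j => Real.sin (φ j)))
    (Matrix.diagonal fun j => Real.sin (φ j))
    (Matrix.diagonal fun j => Real.cos (φ j))

lemma Rot_mul_Rot {n : ℕ} (φ ψ : Fin n → ℝ) : Rot φ * Rot ψ = Rot (φ + ψ) := by
  simp only [Rot, fromBlocks_multiply, Matrix.mul_neg, Matrix.neg_mul, diagonal_mul_diagonal,
    Pi.add_apply, Real.cos_add, Real.sin_add]
  congr 1 <;> ext i j <;> by_cases h : i = j <;> simp [h] <;> ring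

lemma Rot_zero {n : ℕ} : Rot (0 : Fin n → ℝ) = 1 := by
  simp [Rot, ← fromBlocks_one]

lemma Rot_transpose {n : ℕ} (φ : Fin n → ℝ) : (Rot φ)ᵀ = Rot (-φ) := by
  simp [Rot, fromBlocks_transpose]

/-- Rotations are symplectic, hence have determinant `1`. -/
lemma det_Rot {n : ℕ} (φ : Fin n → ℝ) : (Rot φ).det = 1 := by
  refine SymplecticGroup.det_eq_one (SymplecticGroup.mem_iff'.2 ?_)
  have hcomm : Matrix.J (Fin n) ℝ * Rot φ = Rot φ * Matrix.J (Fin n) ℝ := by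
    simp [Matrix.J, Rot, fromBlocks_multiply]
  rw [Matrix.mul_assoc, hcomm, ← Matrix.mul_assoc, Rot_transpose, Rot_mul_Rot, neg_add_cancel,
    Rot_zero, Matrix.one_mul]

/-- Conjugation by `N = diag(Iₙ, -Iₙ)` inverts rotations. -/
lemma conj_Rot {n : ℕ} (φ : Fin n → ℝ) :
    fromBlocks 1 0 0 (-1) * Rot φ * fromBlocks 1 0 0 (-1) = Rot (-φ) := by
  simp [Rot, fromBlocks_multiply]

lemma det_fromBlocks_antidiag {n : ℕ} (B C : Matrix (Fin n) (Fin n) ℝ) :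
    (fromBlocks 0 B C 0).det = (-1) ^ n * B.det * C.det := by
  have h : fromBlocks 0 B C 0 = Matrix.J (Fin n) ℝ * fromBlocks C 0 0 (-B) := by
    simp [Matrix.J, fromBlocks_multiply]
  rw [h, det_mul, SymplecticGroup.det_eq_one (SymplecticGroup.J_mem _ _), det_fromBlocks_zero₂₁,
    det_neg, Fintype.card_fin]
  ring

/-- The commutator of `N = diag(Iₙ, -Iₙ)` with `P` sees only the off-diagonal blocks of `P`. -/
lemma det_commutator {n : ℕ} (P : Matrix (Fin n ⊕ Fin n) (Fin n ⊕ Fin n) ℝ) :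
    (fromBlocks 1 0 0 (-1) * P - P * fromBlocks 1 0 0 (-1)).det =
      2 ^ (2 * n) * P.toBlocks₁₂.det * P.toBlocks₂₁.det := by
  have h : fromBlocks 1 0 0 (-1) * P - P * fromBlocks 1 0 0 (-1) =
      fromBlocks 0 ((2 : ℝ) • P.toBlocks₁₂) ((-2 : ℝ) • P.toBlocks₂₁) 0 := by
    conv_lhs => rw [← fromBlocks_toBlocks P]
    rw [fromBlocks_multiply, fromBlocks_multiply, sub_eq_add_neg, fromBlocks_neg, fromBlocks_add]
    congr 1 <;> simp <;> module
  have h4 : (-1 : ℝ) ^ n * 2 ^ n * (-2) ^ n = 2 ^ (2 * n) := by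
    rw [← mul_pow, ← mul_pow, pow_mul]
    norm_num
  rw [h, det_fromBlocks_antidiag, det_smul, det_smul, Fintype.card_fin, ← h4]
  ring

/-- for `S = R_θ`, `N = diag(Iₙ,-Iₙ)`, symplectic `M` and
`M·R_{θ/2} = [[â,b̂],[ĉ,d̂]]`, one has `det(S N M⁻¹ N M - I) = (-1)ⁿ 2^{2n} det b̂ det ĉ`. -/
theorem stmt14 (n : ℕ) (hn : 1 ≤ n) (θ : Fin n → ℝ)
    (N : Matrix (Fin n ⊕ Fin n) (Fin n ⊕ Fin n) ℝ)
    (hN : N = Matrix.fromBlocks 1 0 0 (-1))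
    (S : Matrix (Fin n ⊕ Fin n) (Fin n ⊕ Fin n) ℝ) (hS : S = Rot θ)
    (M : Matrix (Fin n ⊕ Fin n) (Fin n ⊕ Fin n) ℝ)
    (hM : Mᵀ * JR n * M = JR n) :
    (S * N * M⁻¹ * N * M - 1).det =
      (-1 : ℝ) ^ n * 2 ^ (2 * n) *
        ((M * Rot (fun j => θ j / 2)).toBlocks₁₂).det *
        ((M * Rot (fun j => θ j / 2)).toBlocks₂₁).det := by
  subst hN hS
  set φ : Fin n → ℝ := fun j => θ j / 2 with hφ
  have hdetM : M.det = 1 := SymplecticGroup.det_eq_one (SymplecticGroup.mem_iff'.2 hM)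
  have hθ : θ = φ + φ := by
    ext j
    simp [hφ]
  set N : Matrix (Fin n ⊕ Fin n) (Fin n ⊕ Fin n) ℝ := fromBlocks 1 0 0 (-1) with hN
  have hdetN : N.det = (-1) ^ n := by
    rw [hN, det_fromBlocks_zero₂₁, det_neg]
    simp
  have hinv : M⁻¹ * M = 1 := nonsing_inv_mul M (by simp [hdetM])
  have hdetinv : (M⁻¹).det = 1 := by simp [hdetM]
  have hRR : Rot φ * Rot (-φ) = 1 := by
    rw [Rot_mul_Rot, add_neg_cancel, Rot_zero]
  have hfact : Rot θ * N * M⁻¹ * N * M - 1 =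
      (Rot θ * N * M⁻¹) * (N * (M * Rot φ) - (M * Rot φ) * N) * Rot (-φ) := by
    have h1 : (Rot θ * N * M⁻¹) * (N * (M * Rot φ)) * Rot (-φ) = Rot θ * N * M⁻¹ * N * M := by
      calc _ = Rot θ * N * M⁻¹ * N * M * (Rot φ * Rot (-φ)) := by simp only [Matrix.mul_assoc]
        _ = _ := by rw [hRR, Matrix.mul_one]
    have h2 : (Rot θ * N * M⁻¹) * (M * Rot φ * N) * Rot (-φ) = 1 := by
      calc _ = Rot θ * N * (M⁻¹ * M) * Rot φ * N * Rot (-φ) := by simp only [Matrix.mul_assoc]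
        _ = Rot θ * (N * Rot φ * N) * Rot (-φ) := by
          rw [hinv, Matrix.mul_one]
          simp only [Matrix.mul_assoc]
        _ = 1 := by
          rw [hN, conj_Rot, Rot_mul_Rot, Rot_mul_Rot, hθ, add_neg_cancel_right, add_neg_cancel,
            Rot_zero]
    rw [Matrix.mul_sub, Matrix.sub_mul, h1, h2]
  rw [hfact, det_mul, det_mul, det_mul, det_mul, det_Rot, det_Rot, hdetinv, hdetN, hN,
    det_commutator]
  ring
end

section
/- Let J₂ = [[0,−1],[1,0]] and D = [[0,1],[1,0]]. For every λ ∈ ℂ, if z : [0,1] → ℂ² is differentiable and satisfies ż(t) = λ J₂ D z(t) for all t ∈ [0,1] (note J₂ D = diag(−1,1)), with z(0) ∈ span{(1,0)} and z(1) ∈ span{(0,1)}, then z is identically zero. Equivalently, the fundamental solution is γ_λ(t) = diag(e^{−λt}, e^{λt}) and the boundary value problem has no eigenvalue. -/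
/-!
Since `J₂ D = diag(-1, 1)`, the system decouples into `ż₀ = -λ z₀` and `ż₁ = λ z₁`. The boundary
conditions say `z₁(0) = 0` and `z₀(1) = 0`. A solution of a scalar equation `ḟ = c f` is a constant
multiple of `exp (c t)`, so it vanishes identically as soon as it vanishes at one point
(`scalar_ode_eq_zero`); hence both components are zero, whatever `λ` is.
-/

open Matrix

/-- `J₂ = [[0,-1],[1,0]]` over `ℂ`. -/
def J2C : Matrix (Fin 2) (Fin 2) ℂ := !![0, -1; 1, 0]

/-- `D = [[0,1],[1,0]]` over `ℂ`. -/
def DC : Matrix (Fin 2) (Fin 2) ℂ := !![0, 1; 1, 0]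

theorem J2C_mul_DC : J2C * DC = Matrix.diagonal ![-1, 1] := by
  ext i j
  fin_cases i <;> fin_cases j <;> simp [J2C, DC, Matrix.mul_apply]

/-- A solution of `f' = c f` on `[0,1]` with one zero there is zero: `exp (-c t) * f t` is
constant. -/
theorem scalar_ode_eq_zero (c : ℂ) (f : ℝ → ℂ)
    (hf : ∀ t ∈ Set.Icc (0:ℝ) 1, HasDerivAt f (c * f t) t)
    {s : ℝ} (hs : s ∈ Set.Icc (0:ℝ) 1) (h0 : f s = 0) :
    ∀ t ∈ Set.Icc (0:ℝ) 1, f t = 0 := by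
  have hg : ∀ t ∈ Set.Icc (0:ℝ) 1,
      HasDerivAt (fun t : ℝ => Complex.exp (-c * t) * f t) 0 t := by
    intro t ht
    have h1 : HasDerivAt (fun t : ℝ => Complex.exp (-c * t)) (Complex.exp (-c * t) * (-c * 1)) t :=
      ((Complex.ofRealCLM.hasDerivAt (x := t)).const_mul (-c)).cexp
    exact (h1.mul (hf t ht)).congr_deriv (by ring)
  have hc := constant_of_has_deriv_right_zero
    (fun t ht => (hg t ht).continuousAt.continuousWithinAt)
    (fun t ht => (hg t (Set.Ico_subset_Icc_self ht)).hasDerivWithinAt)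
  intro t ht
  have h := (hc t ht).trans (hc s hs).symm
  simpa [h0, Complex.exp_ne_zero] using h

/-- for every `λ ∈ ℂ`, any solution of `ż = λ J₂ D z` on `[0,1]` with
`z(0) ∈ span{(1,0)}` and `z(1) ∈ span{(0,1)}` vanishes identically; the fundamental
solution is `γ_λ(t) = diag(e^{-λt}, e^{λt})`. -/
theorem stmt19 (lam : ℂ) :
    (∀ z : ℝ → (Fin 2 → ℂ),
      (∀ t ∈ Set.Icc (0:ℝ) 1, HasDerivAt z (lam • (J2C * DC).mulVec (z t)) t) →
      z 0 ∈ Submodule.span ℂ ({![1, 0]} : Set (Fin 2 → ℂ)) →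
      z 1 ∈ Submodule.span ℂ ({![0, 1]} : Set (Fin 2 → ℂ)) →
      ∀ t ∈ Set.Icc (0:ℝ) 1, z t = 0) ∧
    (∀ γ : ℝ → Matrix (Fin 2) (Fin 2) ℂ,
      (∀ t, γ t = Matrix.diagonal ![Complex.exp (-lam * t), Complex.exp (lam * t)]) →
      γ 0 = 1 ∧ ∀ t i j, HasDerivAt (fun s => γ s i j) ((lam • ((J2C * DC) * γ t)) i j) t) := by
  rw [J2C_mul_DC]
  refine ⟨fun z hz h0 h1 => ?_, fun γ hγ => ⟨?_, fun t i j => ?_⟩⟩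
  · obtain ⟨a, ha⟩ := Submodule.mem_span_singleton.1 h0
    obtain ⟨b, hb⟩ := Submodule.mem_span_singleton.1 h1
    have e0 := scalar_ode_eq_zero (-lam) (fun t => z t 0)
      (fun t ht => (hasDerivAt_pi.1 (hz t ht) 0).congr_deriv (by simp))
      (s := 1) (by simp) (by simp [← hb])
    have e1 := scalar_ode_eq_zero lam (fun t => z t 1)
      (fun t ht => (hasDerivAt_pi.1 (hz t ht) 1).congr_deriv (by simp))
      (s := 0) (by simp) (by simp [← ha])
    intro t ht
    ext i
    fin_cases i
    · exact e0 t ht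
    · exact e1 t ht
  · rw [hγ]
    ext i j
    fin_cases i <;> fin_cases j <;> simp
  · have hexp (c : ℂ) : HasDerivAt (fun s : ℝ => Complex.exp (c * s)) (c * Complex.exp (c * t)) t :=
      ((Complex.ofRealCLM.hasDerivAt (x := t)).const_mul c).cexp.congr_deriv (by simp [mul_comm])
    simp only [hγ]
    fin_cases i <;> fin_cases j
    · simpa using hexp (-lam)
    · simpa using hasDerivAt_const t (0 : ℂ)
    · simpa using hasDerivAt_const t (0 : ℂ)
    · simpa using hexp lam
end
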